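/- arXiv:1802.03736 — 3 statements merged into one kernel-verified Lean document; each statement's English description precedes it below -/
import Mathlib

section
/- With the coordinate setup below, the fundamental tensor satisfies, at every point of U and for all indices i, j, k ∈ {1,2,3}: F_{kij} = (1/3)·(g_{kj}θ_i + g_{ki}θ_j + g̃_{kj}θ*_i + g̃_{ki}θ*_j). -/
open scoped BigOperators

/-- Points of ℝ³. -/
abbrev Pt := Fin 3 → ℝ

/-- Partial derivative `∂_i f` at `p`. -/
noncomputable def pd (i : Fin 3) (f : Pt → ℝ) (p : Pt) : ℝ :=
  fderiv ℝ f p (Pi.single i 1)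

/-- The circulant structure `Q` with `Q¹₂ = Q²₃ = Q³₁ = 1`. -/
def Qmat : Matrix (Fin 3) (Fin 3) ℝ := !![0,1,0; 0,0,1; 1,0,0]

/-- The metric `g_{ij}`: diagonal entries `A`, off-diagonal entries `B`. -/
def gm (A B : Pt → ℝ) (i j : Fin 3) (p : Pt) : ℝ :=
  if i = j then A p else B p

/-- The associated metric `g̃_{ij} = g_{is} Q^s_j + g_{sj} Q^s_i`. -/
def gt (A B : Pt → ℝ) (i j : Fin 3) (p : Pt) : ℝ :=
  ∑ s, (gm A B i s p * Qmat s j + gm A B s j p * Qmat s i)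

/-- Christoffel symbols `Γ^k_{ij}` of a metric `h` with (pointwise) inverse `hinv`. -/
noncomputable def Gamma (h hinv : Fin 3 → Fin 3 → Pt → ℝ) (k i j : Fin 3) (p : Pt) : ℝ :=
  (1/2) * ∑ s, hinv k s p * (pd i (h s j) p + pd j (h s i) p - pd s (h i j) p)

/-- Fundamental tensor `F_{kij} = ∂_k g̃_{ij} − Γ^s_{ki} g̃_{sj} − Γ^s_{kj} g̃_{si}`
of the metric `h` (with inverse `hinv`) acting on `ht` (= the associated metric). -/
noncomputable def Ften (h hinv ht : Fin 3 → Fin 3 → Pt → ℝ) (k i j : Fin 3) (p : Pt) : ℝ :=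
  pd k (ht i j) p - (∑ s, Gamma h hinv s k i p * ht s j p)
    - (∑ s, Gamma h hinv s k j p * ht s i p)

/-- Lee form `θ_k = g^{ij} F_{ijk}`. -/
noncomputable def theta (h hinv ht : Fin 3 → Fin 3 → Pt → ℝ) (k : Fin 3) (p : Pt) : ℝ :=
  ∑ i, ∑ j, hinv i j p * Ften h hinv ht i j k p

/-- Lee form `θ*_k = g^{ij} Q^s_j F_{isk}`. -/
noncomputable def thetaStar (h hinv ht : Fin 3 → Fin 3 → Pt → ℝ) (k : Fin 3) (p : Pt) : ℝ :=
  ∑ i, ∑ j, ∑ s, hinv i j p * Qmat s j * Ften h hinv ht i s k p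

/-!
Let `J` be the all-ones matrix and `σ = A + 2B`. Then `g + g̃ = σ J`, and `∇g = 0`, so `F = ∇(σ J)`.
Since `(1, 1, 1)` is an eigenvector of `g` with eigenvalue `σ`, contracting the Christoffel symbols
with `σ (1, 1, 1)` only sums their lowered versions, which gives, with `D = ∂₁ + ∂₂ + ∂₃`,
`2 F_{kij} = D g_{ki} + D g_{kj} - ∂_i σ - ∂_j σ`.
Now `D g` is again constant on and off the diagonal, hence a combination of `g` and `J`, so that
`F_{kij} = c (g_{ki} + g_{kj}) + σ (v_i + v_j)` for a scalar `c` and a covector `v`. Summing `D g`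
along a row gives `c + v₁ + v₂ + v₃ = 0`, by which the traces become `θ_k = 3 (v_k + c)` and
`θ*_k = 3 v_k`; finally replace `σ` by `g_{kj} + g̃_{kj}` and by `g_{ki} + g̃_{ki}`.
-/

lemma pd_sub {f f' : Pt → ℝ} {p : Pt} (hf : DifferentiableAt ℝ f p)
    (hf' : DifferentiableAt ℝ f' p) (k : Fin 3) :
    pd k (fun q => f q - f' q) p = pd k f p - pd k f' p := by
  simp [pd, fderiv_fun_sub hf hf']

/-- The components `hinv` form a right inverse of the matrix of components `h` at the point `p`,
which encodes `hinv i j = h^{ij}` there: one-sided inverses of square matrices are two-sided. -/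
abbrev IsRightInverseAt (h hinv : Fin 3 → Fin 3 → Pt → ℝ) (p : Pt) : Prop :=
  ∀ i j, ∑ s, h i s p * hinv s j p = if i = j then (1 : ℝ) else 0

section LeviCivita

variable {h hinv : Fin 3 → Fin 3 → Pt → ℝ} {p : Pt}

lemma sum_Gamma_mul_eq_of_sum_mul_eq {w w' : Fin 3 → ℝ}
    (hw : ∀ r, ∑ s, w s * hinv s r p = w' r) (i j : Fin 3) :
    ∑ s, Gamma h hinv s i j p * w s =
      (1 / 2) * ∑ r, w' r * (pd i (h r j) p + pd j (h r i) p - pd r (h i j) p) := by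
  simp only [Gamma, ← hw, Finset.mul_sum, Finset.sum_mul]
  rw [Finset.sum_comm]
  exact Finset.sum_congr rfl fun r _ => Finset.sum_congr rfl fun s _ => by ring

theorem Ften_self (hsymm : ∀ i j, h i j = h j i) (hh : IsRightInverseAt h hinv p)
    (k i j : Fin 3) : Ften h hinv h k i j p = 0 := by
  have lower (a b : Fin 3) : ∑ s, Gamma h hinv s k a p * h s b p =
      (1 / 2) * (pd k (h b a) p + pd a (h b k) p - pd b (h k a) p) := by
    rw [sum_Gamma_mul_eq_of_sum_mul_eq (w' := fun r => if b = r then 1 else 0)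
      fun r => by simp only [hsymm _ b, hh]]
    simp
  rw [Ften, lower i j, lower j i, hsymm j i, hsymm j k, hsymm i k]
  ring

lemma Ften_sub {T T' : Fin 3 → Fin 3 → Pt → ℝ} (hT : ∀ i j, DifferentiableAt ℝ (T i j) p)
    (hT' : ∀ i j, DifferentiableAt ℝ (T' i j) p) (k i j : Fin 3) :
    Ften h hinv (fun a b q => T a b q - T' a b q) k i j p =
      Ften h hinv T k i j p - Ften h hinv T' k i j p := by
  simp only [Ften, pd_sub (hT i j) (hT' i j), mul_sub, Finset.sum_sub_distrib]
  ring

end LeviCivita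

/-- The common row sum `σ = A + 2B` of the matrix `g`, i.e. its eigenvalue at `(1, 1, 1)`. -/
def rowSum (A B : Pt → ℝ) (p : Pt) : ℝ :=
  A p + 2 * B p

section Metric

variable {A B : Pt → ℝ} {p : Pt}

lemma gm_comm (A B : Pt → ℝ) (i j : Fin 3) : gm A B i j = gm A B j i := by
  funext q
  simp only [gm, eq_comm]

lemma sum_gm (A B : Pt → ℝ) (j : Fin 3) (p : Pt) : ∑ i, gm A B i j p = rowSum A B p := by
  fin_cases j <;> simp [gm, rowSum, Fin.sum_univ_three] <;> ring

lemma gt_eq_rowSum_sub_gm (A B : Pt → ℝ) :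
    gt A B = fun i j p => rowSum A B p - gm A B i j p := by
  funext i j p
  fin_cases i <;> fin_cases j <;> simp [gt, gm, rowSum, Qmat, Fin.sum_univ_three] <;> ring

lemma differentiableAt_gm (hA : DifferentiableAt ℝ A p) (hB : DifferentiableAt ℝ B p)
    (i j : Fin 3) : DifferentiableAt ℝ (gm A B i j) p := by
  unfold gm
  split_ifs <;> assumption

lemma differentiableAt_rowSum (hA : DifferentiableAt ℝ A p) (hB : DifferentiableAt ℝ B p) :
    DifferentiableAt ℝ (rowSum A B) p :=
  hA.add (hB.const_mul 2)

lemma pd_gm (A B : Pt → ℝ) (k i j : Fin 3) (p : Pt) :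
    pd k (gm A B i j) p = gm (pd k A) (pd k B) i j p := by
  unfold gm
  split_ifs <;> rfl

lemma pd_rowSum (hA : DifferentiableAt ℝ A p) (hB : DifferentiableAt ℝ B p) (k : Fin 3) :
    pd k (rowSum A B) p = rowSum (pd k A) (pd k B) p := by
  unfold rowSum pd
  simp [fderiv_fun_add hA (hB.const_mul 2), fderiv_const_mul hB]

lemma sum_pd_gm (A B : Pt → ℝ) (i j : Fin 3) (p : Pt) :
    ∑ s, pd s (gm A B i j) p = gm (fun q => ∑ s, pd s A q) (fun q => ∑ s, pd s B q) i j p := by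
  simp only [pd_gm]
  unfold gm
  split_ifs <;> rfl

lemma exists_gm_eq_mul_gm_add (hAB : A p ≠ B p) (X Y : Pt → ℝ) :
    ∃ t e : ℝ, ∀ i j, gm X Y i j p = t * gm A B i j p + e := by
  have hAB' : A p - B p ≠ 0 := sub_ne_zero.mpr hAB
  refine ⟨(X p - Y p) / (A p - B p), Y p - (X p - Y p) / (A p - B p) * B p, fun i j => ?_⟩
  unfold gm
  split_ifs
  · field_simp
    ring
  · ring

end Metric

section InverseMetric

variable {A B : Pt → ℝ} {p : Pt} {ginv : Fin 3 → Fin 3 → Pt → ℝ}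

lemma rowSum_mul_sum_ginv (hginv : IsRightInverseAt (gm A B) ginv p) (j : Fin 3) :
    rowSum A B p * ∑ s, ginv s j p = 1 := by
  calc rowSum A B p * ∑ s, ginv s j p
      = ∑ s, (∑ i, gm A B i s p) * ginv s j p := by simp only [sum_gm, Finset.mul_sum]
    _ = ∑ i, ∑ s, gm A B i s p * ginv s j p := by
        simp only [Finset.sum_mul]
        exact Finset.sum_comm
    _ = 1 := by simp [hginv]

lemma rowSum_ne_zero (hginv : IsRightInverseAt (gm A B) ginv p) : rowSum A B p ≠ 0 :=
  left_ne_zero_of_mul_eq_one (rowSum_mul_sum_ginv hginv 0)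

lemma ne_of_isRightInverseAt (hginv : IsRightInverseAt (gm A B) ginv p) : A p ≠ B p := by
  intro hAB
  have rows_eq : ∑ s, gm A B 0 s p * ginv s 0 p = ∑ s, gm A B 1 s p * ginv s 0 p := by
    simp [gm, hAB]
  simp [hginv] at rows_eq

end InverseMetric

section FundamentalTensor

variable {A B : Pt → ℝ} {p : Pt} {ginv : Fin 3 → Fin 3 → Pt → ℝ}

lemma sum_Gamma_mul_rowSum (hA : DifferentiableAt ℝ A p) (hB : DifferentiableAt ℝ B p)
    (hginv : IsRightInverseAt (gm A B) ginv p) (i j : Fin 3) :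
    ∑ s, Gamma (gm A B) ginv s i j p * rowSum A B p =
      (1 / 2) * (pd i (rowSum A B) p + pd j (rowSum A B) p - ∑ s, pd s (gm A B i j) p) := by
  rw [sum_Gamma_mul_eq_of_sum_mul_eq (w' := fun _ => 1)
    fun r => by rw [← Finset.mul_sum, rowSum_mul_sum_ginv hginv]]
  simp only [one_mul, Finset.sum_sub_distrib, Finset.sum_add_distrib, pd_gm, sum_gm,
    pd_rowSum hA hB]

theorem Ften_gm_gt (hA : DifferentiableAt ℝ A p) (hB : DifferentiableAt ℝ B p)
    (hginv : IsRightInverseAt (gm A B) ginv p) (k i j : Fin 3) :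
    Ften (gm A B) ginv (gt A B) k i j p =
      (1 / 2) * (∑ s, pd s (gm A B k i) p + ∑ s, pd s (gm A B k j) p
        - pd i (rowSum A B) p - pd j (rowSum A B) p) := by
  rw [gt_eq_rowSum_sub_gm, Ften_sub (T := fun _ _ => rowSum A B)
    (fun _ _ => differentiableAt_rowSum hA hB) (differentiableAt_gm hA hB),
    Ften_self (gm_comm A B) hginv, Ften, sum_Gamma_mul_rowSum hA hB hginv,
    sum_Gamma_mul_rowSum hA hB hginv]
  ring

theorem exists_Ften_gm_gt_eq (hA : DifferentiableAt ℝ A p) (hB : DifferentiableAt ℝ B p)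
    (hginv : IsRightInverseAt (gm A B) ginv p) :
    ∃ (c : ℝ) (v : Fin 3 → ℝ), c + ∑ i, v i = 0 ∧ ∀ k i j,
      Ften (gm A B) ginv (gt A B) k i j p =
        c * (gm A B k i p + gm A B k j p) + rowSum A B p * (v i + v j) := by
  have hσ : rowSum A B p ≠ 0 := rowSum_ne_zero hginv
  obtain ⟨t, e, ht⟩ := exists_gm_eq_mul_gm_add (ne_of_isRightInverseAt hginv)
    (fun q => ∑ s, pd s A q) (fun q => ∑ s, pd s B q)
  have sum_pd_gm_eq (i j : Fin 3) : ∑ s, pd s (gm A B i j) p = t * gm A B i j p + e := by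
    rw [sum_pd_gm, ht]
  have sum_pd_rowSum_eq : ∑ s, pd s (rowSum A B) p = t * rowSum A B p + 3 * e := by
    calc ∑ s, pd s (rowSum A B) p
        = ∑ i, ∑ s, pd s (gm A B i 0) p := by
          rw [Finset.sum_comm]
          simp only [pd_gm, sum_gm, pd_rowSum hA hB]
      _ = t * rowSum A B p + 3 * e := by
          simp [sum_pd_gm_eq, Finset.sum_add_distrib, ← Finset.mul_sum, sum_gm]
  refine ⟨t / 2, fun i => (e - pd i (rowSum A B) p) / (2 * rowSum A B p), ?_, fun k i j => ?_⟩
  · rw [← Finset.sum_div, Finset.sum_sub_distrib, sum_pd_rowSum_eq, Fin.sum_const, nsmul_eq_mul]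
    field_simp
    ring
  · rw [Ften_gm_gt hA hB hginv, sum_pd_gm_eq, sum_pd_gm_eq]
    field_simp
    ring

end FundamentalTensor

section LeeForms

variable {A B : Pt → ℝ} {p : Pt} {ginv : Fin 3 → Fin 3 → Pt → ℝ} {c : ℝ} {v : Fin 3 → ℝ}

lemma sum_ginv_mul_Ften
    (hginv : IsRightInverseAt (gm A B) ginv p)
    (hF : ∀ k i j, Ften (gm A B) ginv (gt A B) k i j p =
      c * (gm A B k i p + gm A B k j p) + rowSum A B p * (v i + v j)) (j s k : Fin 3) :
    ∑ i, ginv i j p * Ften (gm A B) ginv (gt A B) i s k p =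
      c * ((if s = j then 1 else 0) + (if k = j then 1 else 0)) + (v s + v k) := by
  calc ∑ i, ginv i j p * Ften (gm A B) ginv (gt A B) i s k p
      = c * (∑ i, gm A B s i p * ginv i j p + ∑ i, gm A B k i p * ginv i j p)
          + (rowSum A B p * ∑ i, ginv i j p) * (v s + v k) := by
        simp only [hF, gm_comm A B s, gm_comm A B k, Fin.sum_univ_three]
        ring
    _ = _ := by rw [hginv, hginv, rowSum_mul_sum_ginv hginv, one_mul]

lemma theta_eq_three_mul
    (hginv : IsRightInverseAt (gm A B) ginv p)
    (hF : ∀ k i j, Ften (gm A B) ginv (gt A B) k i j p =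
      c * (gm A B k i p + gm A B k j p) + rowSum A B p * (v i + v j))
    (hcv : c + ∑ i, v i = 0) (k : Fin 3) :
    theta (gm A B) ginv (gt A B) k p = 3 * (v k + c) := by
  have trace : theta (gm A B) ginv (gt A B) k p = 4 * c + ∑ j, v j + 3 * v k := by
    rw [theta, Finset.sum_comm]
    simp only [sum_ginv_mul_Ften hginv hF, ↓reduceIte, Finset.sum_add_distrib, ← Finset.mul_sum,
      Finset.sum_ite_eq, Finset.mem_univ, Fin.sum_const, nsmul_eq_mul]
    ring
  linear_combination trace + hcv

lemma thetaStar_eq_three_mul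
    (hginv : IsRightInverseAt (gm A B) ginv p)
    (hF : ∀ k i j, Ften (gm A B) ginv (gt A B) k i j p =
      c * (gm A B k i p + gm A B k j p) + rowSum A B p * (v i + v j))
    (hcv : c + ∑ i, v i = 0) (k : Fin 3) :
    thetaStar (gm A B) ginv (gt A B) k p = 3 * v k := by
  have contract : thetaStar (gm A B) ginv (gt A B) k p =
      ∑ j, ∑ s, Qmat s j * ∑ i, ginv i j p * Ften (gm A B) ginv (gt A B) i s k p := by
    simp only [thetaStar, Fin.sum_univ_three]
    ring
  have trace : thetaStar (gm A B) ginv (gt A B) k p = c + ∑ j, v j + 3 * v k := by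
    rw [contract]
    simp only [sum_ginv_mul_Ften hginv hF]
    fin_cases k <;> simp [Qmat, Fin.sum_univ_three] <;> ring
  linear_combination trace + hcv

end LeeForms

theorem fundamental_tensor_identity_general {A B : Pt → ℝ} {p : Pt}
    (hA : DifferentiableAt ℝ A p) (hB : DifferentiableAt ℝ B p)
    {ginv : Fin 3 → Fin 3 → Pt → ℝ}
    (hginv : IsRightInverseAt (gm A B) ginv p) (i j k : Fin 3) :
    Ften (gm A B) ginv (gt A B) k i j p =
      (1 / 3) * (gm A B k j p * theta (gm A B) ginv (gt A B) i p
        + gm A B k i p * theta (gm A B) ginv (gt A B) j p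
        + gt A B k j p * thetaStar (gm A B) ginv (gt A B) i p
        + gt A B k i p * thetaStar (gm A B) ginv (gt A B) j p) := by
  obtain ⟨c, v, hcv, hF⟩ := exists_Ften_gm_gt_eq hA hB hginv
  have hθ := theta_eq_three_mul hginv hF hcv
  have hθStar := thetaStar_eq_three_mul hginv hF hcv
  rw [hF, hθ, hθ, hθStar, hθStar, gt_eq_rowSum_sub_gm]
  ring

/-- on `(M, g, Q)` the fundamental tensor satisfies
`F_{kij} = (1/3)(g_{kj}θ_i + g_{ki}θ_j + g̃_{kj}θ*_i + g̃_{ki}θ*_j)`. -/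
theorem fundamental_tensor_identity
    (U : Set Pt) (hU : IsOpen U) (A B : Pt → ℝ)
    (hA : ContDiffOn ℝ (⊤ : ℕ∞) A U) (hB : ContDiffOn ℝ (⊤ : ℕ∞) B U)
    (hpos : ∀ p ∈ U, 0 < B p ∧ B p < A p)
    (ginv : Fin 3 → Fin 3 → Pt → ℝ)
    (hginv : ∀ p ∈ U, ∀ i j, (∑ s, gm A B i s p * ginv s j p) = if i = j then (1:ℝ) else 0) :
    ∀ p ∈ U, ∀ i j k,
      Ften (gm A B) ginv (gt A B) k i j p =
        (1/3) * (gm A B k j p * theta (gm A B) ginv (gt A B) i p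
          + gm A B k i p * theta (gm A B) ginv (gt A B) j p
          + gt A B k j p * thetaStar (gm A B) ginv (gt A B) i p
          + gt A B k i p * thetaStar (gm A B) ginv (gt A B) j p) := by
  intro p hp i j k
  have hAp := (hA.contDiffAt (hU.mem_nhds hp)).differentiableAt (by simp)
  have hBp := (hB.contDiffAt (hU.mem_nhds hp)).differentiableAt (by simp)
  exact fundamental_tensor_identity_general hAp hBp (hginv p hp) i j k
end

section
/- With the coordinate setup below, the Ricci tensors and scalar curvatures of g and g̃ satisfy, at every point of U: ρ̃_{ij} = ρ_{ij} + (1/3)·(τ̃* − τ)·g_{ij} + (1/6)·(2τ̃ − 2τ* + τ̃* − τ)·g̃_{ij}. -/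
open scoped BigOperators

/-- Curvature `R^l_{ijk} = ∂_i Γ^l_{jk} − ∂_j Γ^l_{ik} + Γ^s_{jk}Γ^l_{is} − Γ^s_{ik}Γ^l_{js}`
of the metric `h` with inverse `hinv`. -/
noncomputable def Riem (h hinv : Fin 3 → Fin 3 → Pt → ℝ) (l i j k : Fin 3) (p : Pt) : ℝ :=
  pd i (Gamma h hinv l j k) p - pd j (Gamma h hinv l i k) p
    + (∑ s, Gamma h hinv s j k p * Gamma h hinv l i s p)
    - (∑ s, Gamma h hinv s i k p * Gamma h hinv l j s p)

/-- Lowered curvature `R_{ijkl} = h_{ls} R^s_{ijk}`. -/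
noncomputable def RiemLow (h hinv : Fin 3 → Fin 3 → Pt → ℝ) (i j k l : Fin 3) (p : Pt) : ℝ :=
  ∑ s, h l s p * Riem h hinv s i j k p

/-- Ricci tensor `ρ_{jk} = h^{il} R_{ijkl}`. -/
noncomputable def Ricci (h hinv : Fin 3 → Fin 3 → Pt → ℝ) (j k : Fin 3) (p : Pt) : ℝ :=
  ∑ i, ∑ l, hinv i l p * RiemLow h hinv i j k l p

/-- Scalar curvature obtained by contracting the Ricci tensor of `(h, hinv)` with the
(inverse) metric `contr`: `contr^{jk} ρ_{jk}`. -/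
noncomputable def scal (h hinv contr : Fin 3 → Fin 3 → Pt → ℝ) (p : Pt) : ℝ :=
  ∑ j, ∑ k, contr j k p * Ricci h hinv j k p

/-!
Both `g` and `g̃` have the form `a (1 - P) + c P`, where `P` is the constant orthogonal projection
onto the diagonal of `ℝ³`: `(a, c)` is `(A - B, A + 2 B)` for `g` and `(-(A - B), 2 (A + 2 B))` for
`g̃`. The Levi-Civita connection of such a metric is `X + V ⊗ P + W ⊗ (1 - P)`, where `X` does not
change when `a` and `c` are multiplied by constants `κ` and `μ`, while `V` and `W` are multiplied by
`μ / κ` and `κ / μ`. Since `P V = 0` and `(1 - P) W = 0`, the Ricci tensor is that of `X` plus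
multiples of `P` and `1 - P` and the cross term `-(V Wᵀ + W Vᵀ)`, which does not see the rescaling.
Hence `ρ̃ - ρ` is a combination of `P` and `1 - P`, equivalently of `g` and `g̃`, and its two
contractions with the inverse metrics determine the coefficients.
-/

open Matrix Filter Topology

section Projections

lemma isSymm_of_isStarProjection {n : Type*} [Fintype n] {P : Matrix n n ℝ}
    (hP : IsStarProjection P) : P.IsSymm :=
  (conjTranspose_eq_transpose_of_trivial P).symm.trans hP.isSelfAdjoint

lemma smul_one_sub_add_smul_mul {R S : Type*} [CommRing R] [Ring S] [Algebra R S] {P : S}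
    (hP : IsIdempotentElem P) (x y u v : R) :
    (x • (1 - P) + y • P) * (u • (1 - P) + v • P) = (x * u) • (1 - P) + (y * v) • P := by
  simp only [mul_add, add_mul, smul_mul_smul_comm, hP.eq, hP.one_sub.eq, hP.mul_one_sub_self,
    hP.one_sub_mul_self, smul_zero, add_zero, zero_add]

end Projections

section PartialDerivatives

variable {f g : Pt → ℝ} {p : Pt}

lemma pd_add (hf : DifferentiableAt ℝ f p) (hg : DifferentiableAt ℝ g p) (i : Fin 3) :
    pd i (fun q => f q + g q) p = pd i f p + pd i g p := by
  simp [pd, fderiv_fun_add hf hg]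

lemma pd_mul_const (hf : DifferentiableAt ℝ f p) (r : ℝ) (i : Fin 3) :
    pd i (fun q => f q * r) p = pd i f p * r := by
  rw [pd, fderiv_mul_const hf]
  simp [pd, mul_comm]

lemma pd_const_smul (r : ℝ) (f : Pt → ℝ) (p : Pt) (i : Fin 3) :
    pd i (r • f) p = r * pd i f p := by
  simp [pd, fderiv_const_smul_field]

lemma pd_congr (h : f =ᶠ[𝓝 p] g) (i : Fin 3) : pd i f p = pd i g p := by
  simp only [pd, h.fderiv_eq]

lemma differentiableAt_pd (hf : ContDiffAt ℝ 2 f p) (i : Fin 3) :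
    DifferentiableAt ℝ (pd i f) p :=
  ((hf.fderiv_right (m := 1) (by norm_num)).differentiableAt one_ne_zero).clm_apply
    (differentiableAt_const _)

lemma mulVec_pd {V : Pt → Pt} (hV : DifferentiableAt ℝ V p) (M : Matrix (Fin 3) (Fin 3) ℝ)
    (i : Fin 3) :
    M *ᵥ (fun l => pd i (fun q => V q l) p) = fun k => pd i (fun q => (M *ᵥ V q) k) p := by
  have hV' : ∀ l, DifferentiableAt ℝ (fun q => V q l) p := differentiableAt_pi.1 hV
  ext k
  simp only [mulVec, dotProduct, pd]
  rw [fderiv_fun_sum fun l _ => (hV' l).const_mul (M k l)]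
  simp [fderiv_const_mul (hV' _)]

/-- The coordinate gradient `(∂₁ f, ∂₂ f, ∂₃ f)`. -/
noncomputable def grad (f : Pt → ℝ) (p : Pt) : Pt := fun i => pd i f p

/-- The coordinate gradient of `log |f|`. -/
noncomputable def logGrad (f : Pt → ℝ) (p : Pt) : Pt := (f p)⁻¹ • grad f p

lemma grad_const_smul (r : ℝ) (f : Pt → ℝ) (p : Pt) : grad (r • f) p = r • grad f p := by
  ext i
  exact pd_const_smul r f p i

lemma logGrad_const_smul {r : ℝ} (hr : r ≠ 0) (f : Pt → ℝ) : logGrad (r • f) = logGrad f := by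
  ext p i
  simp only [logGrad, grad_const_smul, Pi.smul_apply, smul_eq_mul]
  field_simp

lemma differentiableAt_grad (hf : ContDiffAt ℝ 2 f p) : DifferentiableAt ℝ (grad f) p :=
  differentiableAt_pi.2 (differentiableAt_pd hf)

lemma differentiableAt_logGrad (hf : ContDiffAt ℝ 2 f p) (h0 : f p ≠ 0) :
    DifferentiableAt ℝ (logGrad f) p :=
  ((hf.differentiableAt two_ne_zero).inv h0).smul (differentiableAt_grad hf)

end PartialDerivatives

section Connections

/-- Connection coefficients `C k i j p`, standing for `C^k_{ij}(p)` as in `Gamma`. -/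
abbrev ConnCoeff := Fin 3 → Fin 3 → Fin 3 → Pt → ℝ

/-- The Ricci tensor of the affine connection with coefficients `C`. -/
noncomputable def connRicci (C : ConnCoeff) (p : Pt) : Matrix (Fin 3) (Fin 3) ℝ :=
  of fun j k => ∑ i, (pd i (C i j k) p - pd j (C i i k) p
    + (∑ s, C s j k p * C i i s p) - ∑ s, C s i k p * C i j s p)

/-- The zeroth-order part `C^s_{ki} v^i` of the covariant derivative of a vector field `v`. -/
def connEndo (C : ConnCoeff) (p v : Pt) : Matrix (Fin 3) (Fin 3) ℝ :=
  of fun s k => ∑ i, C s k i p * v i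

/-- The divergence of the vector field `V` with respect to the connection `C`. -/
noncomputable def connDiv (C : ConnCoeff) (V : Pt → Pt) (p : Pt) : ℝ :=
  ∑ i, pd i (fun q => V q i) p + (connEndo C p (V p)).trace

/-- The connection `C` modified by the tensor `V ⊗ P`. -/
def addUmbilic (C : ConnCoeff) (V : Pt → Pt) (P : Matrix (Fin 3) (Fin 3) ℝ) : ConnCoeff :=
  fun k i j p => C k i j p + V p k * P i j

variable {C C' : ConnCoeff} {V : Pt → Pt} {P : Matrix (Fin 3) (Fin 3) ℝ} {p : Pt}

lemma connRicci_congr (h : ∀ᶠ q in 𝓝 p, ∀ k i j, C k i j q = C' k i j q) :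
    connRicci C p = connRicci C' p := by
  have hpd (m k i j : Fin 3) : pd m (C k i j) p = pd m (C' k i j) p :=
    pd_congr (h.mono fun q hq => hq k i j) m
  ext j k
  simp only [connRicci, hpd, h.self_of_nhds]

lemma connEndo_addUmbilic (C : ConnCoeff) (V : Pt → Pt) (P : Matrix (Fin 3) (Fin 3) ℝ)
    (p v : Pt) :
    connEndo (addUmbilic C V P) p v = connEndo C p v + vecMulVec (V p) (P *ᵥ v) := by
  ext s k
  simp only [connEndo, addUmbilic, of_apply, Matrix.add_apply, vecMulVec_apply, mulVec, dotProduct,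
    Finset.mul_sum, ← Finset.sum_add_distrib]
  exact Finset.sum_congr rfl fun i _ => by ring

lemma connDiv_addUmbilic (C : ConnCoeff) (V W : Pt → Pt) (P : Matrix (Fin 3) (Fin 3) ℝ)
    (p : Pt) :
    connDiv (addUmbilic C V P) W p = connDiv C W p + V p ⬝ᵥ P *ᵥ W p := by
  simp only [connDiv, connEndo_addUmbilic, trace_add, trace_vecMulVec, add_assoc]

lemma connDiv_const_smul (C : ConnCoeff) (r : ℝ) (V : Pt → Pt) (p : Pt) :
    connDiv C (r • V) p = r * connDiv C V p := by
  have hpd (i : Fin 3) : pd i (fun q => (r • V) q i) p = r * pd i (fun q => V q i) p :=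
    pd_const_smul r (fun q => V q i) p i
  have hendo : connEndo C p ((r • V) p) = r • connEndo C p (V p) := by
    ext s k
    simp only [connEndo, of_apply, Pi.smul_apply, Matrix.smul_apply, smul_eq_mul, Finset.mul_sum]
    exact Finset.sum_congr rfl fun i _ => by ring
  simp only [connDiv, hpd, hendo, trace_smul, smul_eq_mul, ← Finset.mul_sum, mul_add]

/-- `P V = 0` removes the derivative of the trace of `V ⊗ P` and everything quadratic in `V`. -/
lemma connRicci_addUmbilic (hC : ∀ k i j, DifferentiableAt ℝ (C k i j) p)
    (hsymm : ∀ k i j, C k i j p = C k j i p) (hV : DifferentiableAt ℝ V p)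
    (hP : P.IsSymm) (hPV : ∀ q, P *ᵥ V q = 0) :
    connRicci (addUmbilic C V P) p = connRicci C p + connDiv C V p • P
      - (P * connEndo C p (V p) + (P * connEndo C p (V p))ᵀ) := by
  have hpd (m k i j : Fin 3) : pd m (addUmbilic C V P k i j) p
      = pd m (C k i j) p + pd m (fun q => V q k) p * P i j := by
    have hVk : DifferentiableAt ℝ (fun q => V q k) p := differentiableAt_pi.1 hV k
    exact (pd_add (hC k i j) (hVk.mul_const _) m).trans (by rw [pd_mul_const hVk])
  have hPdV (m k : Fin 3) : ∑ i, P i k * pd m (fun q => V q i) p = 0 := by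
    have hPdV' : P *ᵥ (fun i => pd m (fun q => V q i) p) = 0 := by
      rw [mulVec_pd hV]
      ext
      simp [pd, hPV]
    simpa [mulVec, dotProduct, hP.apply k] using congrFun hPdV' k
  have hPVp (k : Fin 3) : ∑ i, P i k * V p i = 0 := by
    simpa [mulVec, dotProduct, hP.apply k] using congrFun (hPV p) k
  ext j k
  simp only [connRicci, hpd, of_apply, addUmbilic, Matrix.add_apply, Matrix.sub_apply,
    Matrix.smul_apply, transpose_apply, mul_apply, connDiv, connEndo, trace, diag_apply,
    smul_eq_mul, Fin.sum_univ_three, fun s i => hsymm s i k, fun i => hP.apply i k] at hPdV hPVp ⊢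
  linear_combination C 0 k j p * hPVp 0 + C 1 k j p * hPVp 1 + C 2 k j p * hPVp 2
    + P j k * (V p 0 * hPVp 0 + V p 1 * hPVp 1 + V p 2 * hPVp 2)
    - (V p 0 * P j 0 + V p 1 * P j 1 + V p 2 * P j 2) * hPVp k - hPdV j k

end Connections

section RicciContraction

variable {h hinv : Fin 3 → Fin 3 → Pt → ℝ} {p : Pt}

/-- `hinv` is the inverse of the matrix of functions `h` at the point `p`. -/
def IsInverseAt (h hinv : Fin 3 → Fin 3 → Pt → ℝ) (p : Pt) : Prop :=
  of (fun i j => h i j p) * of (fun i j => hinv i j p) = 1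

lemma isInverseAt_iff :
    IsInverseAt h hinv p ↔ ∀ i j, ∑ s, h i s p * hinv s j p = if i = j then (1 : ℝ) else 0 := by
  simp only [IsInverseAt, ← Matrix.ext_iff, mul_apply, of_apply, one_apply]

lemma IsInverseAt.symm (hh : IsInverseAt h hinv p) : IsInverseAt hinv h p := by
  unfold IsInverseAt at *
  exact mul_eq_one_comm.1 hh

lemma ricci_eq_connRicci_gamma (hh : IsInverseAt h hinv p) :
    (of fun j k => Ricci h hinv j k p) = connRicci (Gamma h hinv) p := by
  have hleft (i s : Fin 3) : ∑ l, hinv i l p * h l s p = if i = s then (1 : ℝ) else 0 :=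
    isInverseAt_iff.1 hh.symm i s
  have hcontract (i j k : Fin 3) : ∑ l, hinv i l p * RiemLow h hinv i j k l p
      = Riem h hinv i i j k p := by
    simp only [RiemLow, Finset.mul_sum]
    rw [Finset.sum_comm]
    simp [← mul_assoc, ← Finset.sum_mul, hleft]
  ext j k
  simp only [Ricci, hcontract, Riem, connRicci, of_apply]

end RicciContraction

section SplitMetrics

variable {P : Matrix (Fin 3) (Fin 3) ℝ} {a c : Pt → ℝ} {p : Pt}
  {hinv hinv' : Fin 3 → Fin 3 → Pt → ℝ}

/-- The metric `a (1 - P) + c P` attached to an orthogonal projection `P`: the coordinate metric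
rescaled by `a` on the kernel and by `c` on the image of `P`. -/
def splitMetric (P : Matrix (Fin 3) (Fin 3) ℝ) (a c : Pt → ℝ) (i j : Fin 3) (p : Pt) : ℝ :=
  (a p • (1 - P) + c p • P) i j

/-- The part of the Levi-Civita connection of `splitMetric P a c` that is unchanged when `a` and
`c` are multiplied by constants. -/
noncomputable def scaleInvConn (P : Matrix (Fin 3) (Fin 3) ℝ) (a c : Pt → ℝ) : ConnCoeff :=
  fun k i j p =>
    (1/2) * (logGrad a p i * (1 - P) k j + logGrad a p j * (1 - P) k i
      + logGrad c p i * P k j + logGrad c p j * P k i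
      - ((1 - P) *ᵥ logGrad a p) k * (1 - P) i j - (P *ᵥ logGrad c p) k * P i j)

/-- The leaves tangent to the image of `P` are umbilic for `splitMetric P a c`, and `umbilicVec`
is the vector field `V` for which `V ⊗ P` is their second fundamental form. For the leaves tangent
to the kernel of `P`, apply it to `1 - P` and exchange `a` and `c`. -/
noncomputable def umbilicVec (P : Matrix (Fin 3) (Fin 3) ℝ) (a c : Pt → ℝ) (p : Pt) : Pt :=
  -(2 * a p)⁻¹ • (1 - P) *ᵥ grad c p

/-- The coefficient of `P` contributed to the Ricci tensor of `splitMetric P a c` by the umbilic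
tensor `umbilicVec P a c ⊗ P`. -/
noncomputable def umbilicRicci (P : Matrix (Fin 3) (Fin 3) ℝ) (a c : Pt → ℝ) (p : Pt) : ℝ :=
  connDiv (scaleInvConn P a c) (umbilicVec P a c) p - logGrad c p ⬝ᵥ umbilicVec P a c p

lemma scaleInvConn_one_sub (P : Matrix (Fin 3) (Fin 3) ℝ) (a c : Pt → ℝ) :
    scaleInvConn (1 - P) c a = scaleInvConn P a c := by
  ext k i j p
  simp only [scaleInvConn, sub_sub_cancel]
  ring

lemma scaleInvConn_symm (hP : P.IsSymm) (a c : Pt → ℝ) (k i j : Fin 3) (p : Pt) :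
    scaleInvConn P a c k i j p = scaleInvConn P a c k j i p := by
  simp only [scaleInvConn, hP.apply i j, (isSymm_one.sub hP).apply i j]
  ring

lemma differentiableAt_scaleInvConn (ha : ContDiffAt ℝ 2 a p) (hc : ContDiffAt ℝ 2 c p)
    (ha0 : a p ≠ 0) (hc0 : c p ≠ 0) (k i j : Fin 3) :
    DifferentiableAt ℝ (scaleInvConn P a c k i j) p := by
  have hF := differentiableAt_pi.1 (differentiableAt_logGrad ha ha0)
  have hH := differentiableAt_pi.1 (differentiableAt_logGrad hc hc0)
  unfold scaleInvConn mulVec dotProduct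
  fun_prop

lemma differentiableAt_umbilicVec (ha : ContDiffAt ℝ 2 a p) (hc : ContDiffAt ℝ 2 c p)
    (ha0 : a p ≠ 0) : DifferentiableAt ℝ (umbilicVec P a c) p := by
  have ha' := ha.differentiableAt two_ne_zero
  have hdc := differentiableAt_pi.1 (differentiableAt_grad hc)
  unfold umbilicVec mulVec dotProduct
  fun_prop (disch := simpa using ha0)

lemma mulVec_umbilicVec (hP : IsIdempotentElem P) (a c : Pt → ℝ) (p : Pt) :
    P *ᵥ umbilicVec P a c p = 0 := by
  simp [umbilicVec, mulVec_neg, mulVec_smul, mulVec_mulVec, hP.mul_one_sub_self]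

lemma connEndo_scaleInvConn (P : Matrix (Fin 3) (Fin 3) ℝ) (a c : Pt → ℝ) (p v : Pt) :
    connEndo (scaleInvConn P a c) p v = (1/2 : ℝ) •
      (vecMulVec ((1 - P) *ᵥ v) (logGrad a p) + (logGrad a p ⬝ᵥ v) • (1 - P)
        + vecMulVec (P *ᵥ v) (logGrad c p) + (logGrad c p ⬝ᵥ v) • P
        - vecMulVec ((1 - P) *ᵥ logGrad a p) ((1 - P) *ᵥ v)
        - vecMulVec (P *ᵥ logGrad c p) (P *ᵥ v)) := by
  ext s k
  simp only [connEndo, scaleInvConn, of_apply, Matrix.smul_apply, Matrix.sub_apply (_ - _),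
    Matrix.sub_apply (_ + _), Matrix.add_apply, vecMulVec_apply, mulVec, dotProduct,
    smul_eq_mul, Fin.sum_univ_three]
  ring

lemma mul_connEndo_scaleInvConn (hP : IsIdempotentElem P) {v : Pt} (hv : P *ᵥ v = 0) :
    P * connEndo (scaleInvConn P a c) p v = (1/2 * (logGrad c p ⬝ᵥ v)) • P := by
  simp [connEndo_scaleInvConn, mul_add, mul_sub, mul_vecMulVec, hv, hP.mul_one_sub_self, hP.eq,
    sub_mulVec, mulVec_sub, mulVec_mulVec, smul_smul]

lemma eq_splitMetric_inv (hP : IsIdempotentElem P) (ha0 : a p ≠ 0) (hc0 : c p ≠ 0)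
    (hh : IsInverseAt (splitMetric P a c) hinv p) (i j : Fin 3) :
    hinv i j p = splitMetric P a⁻¹ c⁻¹ i j p := by
  have hleft : ((a p)⁻¹ • (1 - P) + (c p)⁻¹ • P) * (a p • (1 - P) + c p • P) = 1 := by
    simp [smul_one_sub_add_smul_mul hP, ha0, hc0]
  exact congrFun₂ (left_inv_eq_right_inv hleft hh).symm i j

lemma pd_splitMetric (ha : DifferentiableAt ℝ a p) (hc : DifferentiableAt ℝ c p)
    (l i j : Fin 3) :
    pd l (splitMetric P a c i j) p = grad a p l * (1 - P) i j + grad c p l * P i j := by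
  refine (pd_add (ha.mul_const ((1 - P) i j)) (hc.mul_const (P i j)) l).trans ?_
  rw [pd_mul_const ha, pd_mul_const hc, grad, grad]

lemma gamma_splitMetric (hP : IsIdempotentElem P) (ha : DifferentiableAt ℝ a p)
    (hc : DifferentiableAt ℝ c p) (ha0 : a p ≠ 0) (hc0 : c p ≠ 0)
    (hh : IsInverseAt (splitMetric P a c) hinv p) (k i j : Fin 3) :
    Gamma (splitMetric P a c) hinv k i j p
      = addUmbilic (addUmbilic (scaleInvConn P a c) (umbilicVec P a c) P)
          (umbilicVec (1 - P) c a) (1 - P) k i j p := by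
  have hinv_eq := eq_splitMetric_inv hP ha0 hc0 hh
  have hinv_mul (x y : ℝ) (l : Fin 3) : ∑ s, hinv k s p * (x * (1 - P) s l + y * P s l)
      = (a p)⁻¹ * x * (1 - P) k l + (c p)⁻¹ * y * P k l := by
    simp only [hinv_eq]
    exact congrFun₂ (smul_one_sub_add_smul_mul hP (a p)⁻¹ (c p)⁻¹ x y) k l
  have hinv_mulVec (f : Pt → ℝ) : ∑ s, hinv k s p * grad f p s
      = (a p)⁻¹ * ((1 - P) *ᵥ grad f p) k + (c p)⁻¹ * (P *ᵥ grad f p) k := by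
    simp only [hinv_eq]
    exact congrFun (show ((a p)⁻¹ • (1 - P) + (c p)⁻¹ • P) *ᵥ grad f p
      = (a p)⁻¹ • (1 - P) *ᵥ grad f p + (c p)⁻¹ • P *ᵥ grad f p by
        rw [add_mulVec, smul_mulVec, smul_mulVec]) k
  have hi := hinv_mul (grad a p i) (grad c p i) j
  have hj := hinv_mul (grad a p j) (grad c p j) i
  have ha_grad := hinv_mulVec a
  have hc_grad := hinv_mulVec c
  simp only [Gamma, pd_splitMetric ha hc, addUmbilic, scaleInvConn, umbilicVec, logGrad,
    mulVec_smul, Pi.smul_apply, smul_eq_mul, sub_sub_cancel, Fin.sum_univ_three]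
    at hi hj ha_grad hc_grad ⊢
  linear_combination
    (1/2) * (hi + hj - (1 - P) i j * ha_grad - P i j * hc_grad)

lemma connRicci_addUmbilic_scaleInvConn (hP : IsStarProjection P) (ha : ContDiffAt ℝ 2 a p)
    (hc : ContDiffAt ℝ 2 c p) (ha0 : a p ≠ 0) (hc0 : c p ≠ 0) :
    connRicci (addUmbilic (scaleInvConn P a c) (umbilicVec P a c) P) p
      = connRicci (scaleInvConn P a c) p + umbilicRicci P a c p • P := by
  have hPsymm := isSymm_of_isStarProjection hP
  have hPV := mulVec_umbilicVec hP.isIdempotentElem a c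
  rw [connRicci_addUmbilic (differentiableAt_scaleInvConn ha hc ha0 hc0)
      (fun k i j => scaleInvConn_symm hPsymm a c k i j p) (differentiableAt_umbilicVec ha hc ha0)
      hPsymm hPV,
    mul_connEndo_scaleInvConn hP.isIdempotentElem (hPV p), transpose_smul, hPsymm.eq, umbilicRicci]
  module

/-- The symmetrized product of the two umbilic vectors comes from the modification of the
connection already made along the image of `P`. -/
lemma connRicci_addUmbilic_addUmbilic_scaleInvConn (hP : IsStarProjection P)
    (ha : ContDiffAt ℝ 2 a p) (hc : ContDiffAt ℝ 2 c p) (ha0 : a p ≠ 0) (hc0 : c p ≠ 0) :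
    connRicci (addUmbilic (addUmbilic (scaleInvConn P a c) (umbilicVec P a c) P)
        (umbilicVec (1 - P) c a) (1 - P)) p
      = connRicci (addUmbilic (scaleInvConn P a c) (umbilicVec P a c) P) p
        + umbilicRicci (1 - P) c a p • (1 - P)
        - (vecMulVec (umbilicVec P a c p) (umbilicVec (1 - P) c a p)
          + (vecMulVec (umbilicVec P a c p) (umbilicVec (1 - P) c a p))ᵀ) := by
  set V := umbilicVec P a c
  set W := umbilicVec (1 - P) c a
  have hPsymm := isSymm_of_isStarProjection hP
  have hNsymm := isSymm_one.sub hPsymm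
  have hPV : P *ᵥ V p = 0 := mulVec_umbilicVec hP.isIdempotentElem a c p
  have hNW : ∀ q, (1 - P) *ᵥ W q = 0 := mulVec_umbilicVec hP.isIdempotentElem.one_sub c a
  have hNV : (1 - P) *ᵥ V p = V p := by
    rw [sub_mulVec, one_mulVec, hPV, sub_zero]
  have hPW : P *ᵥ W p = W p := by
    simpa [sub_mulVec, sub_eq_zero, eq_comm] using hNW p
  have horth : V p ⬝ᵥ W p = 0 := by
    rw [← hPW, dotProduct_mulVec, ← mulVec_transpose, hPsymm.eq, hPV, zero_dotProduct]
  have hendo : (1 - P) * connEndo (scaleInvConn P a c) p (W p)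
      = (1/2 * (logGrad a p ⬝ᵥ W p)) • (1 - P) := by
    rw [← scaleInvConn_one_sub]
    exact mul_connEndo_scaleInvConn hP.isIdempotentElem.one_sub (hNW p)
  have hXV : ∀ k i j, DifferentiableAt ℝ (addUmbilic (scaleInvConn P a c) V P k i j) p :=
    fun k i j => (differentiableAt_scaleInvConn ha hc ha0 hc0 k i j).add
      ((differentiableAt_pi.1 (differentiableAt_umbilicVec ha hc ha0) k).mul_const (P i j))
  have hXVsymm : ∀ k i j, addUmbilic (scaleInvConn P a c) V P k i j p
      = addUmbilic (scaleInvConn P a c) V P k j i p := fun k i j => by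
    simp only [addUmbilic, scaleInvConn_symm hPsymm a c k i j p, hPsymm.apply i j]
  rw [connRicci_addUmbilic hXV hXVsymm (differentiableAt_umbilicVec hc ha hc0) hNsymm hNW,
    connDiv_addUmbilic, connEndo_addUmbilic, hPW, horth, mul_add, hendo, mul_vecMulVec, hNV,
    transpose_add, transpose_smul, hNsymm.eq, umbilicRicci, scaleInvConn_one_sub]
  module

lemma ricci_splitMetric (hP : IsStarProjection P) (ha : ContDiffAt ℝ 2 a p)
    (hc : ContDiffAt ℝ 2 c p) (ha0 : a p ≠ 0) (hc0 : c p ≠ 0)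
    (hh : ∀ᶠ q in 𝓝 p, IsInverseAt (splitMetric P a c) hinv q) :
    (of fun j k => Ricci (splitMetric P a c) hinv j k p) = connRicci (scaleInvConn P a c) p
      + umbilicRicci P a c p • P + umbilicRicci (1 - P) c a p • (1 - P)
      - (vecMulVec (umbilicVec P a c p) (umbilicVec (1 - P) c a p)
        + (vecMulVec (umbilicVec P a c p) (umbilicVec (1 - P) c a p))ᵀ) := by
  have hgamma : ∀ᶠ q in 𝓝 p, ∀ k i j, Gamma (splitMetric P a c) hinv k i j q
      = addUmbilic (addUmbilic (scaleInvConn P a c) (umbilicVec P a c) P)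
          (umbilicVec (1 - P) c a) (1 - P) k i j q := by
    filter_upwards [hh, ha.eventually (by simp), hc.eventually (by simp),
      ha.continuousAt.eventually_ne ha0, hc.continuousAt.eventually_ne hc0]
      with q hhq haq hcq ha0q hc0q
    exact gamma_splitMetric hP.isIdempotentElem (haq.differentiableAt two_ne_zero)
      (hcq.differentiableAt two_ne_zero) ha0q hc0q hhq
  rw [ricci_eq_connRicci_gamma hh.self_of_nhds, connRicci_congr hgamma,
    connRicci_addUmbilic_addUmbilic_scaleInvConn hP ha hc ha0 hc0,
    connRicci_addUmbilic_scaleInvConn hP ha hc ha0 hc0]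

lemma scaleInvConn_const_smul {κ μ : ℝ} (hκ : κ ≠ 0) (hμ : μ ≠ 0)
    (P : Matrix (Fin 3) (Fin 3) ℝ) (a c : Pt → ℝ) :
    scaleInvConn P (κ • a) (μ • c) = scaleInvConn P a c := by
  unfold scaleInvConn
  rw [logGrad_const_smul hκ, logGrad_const_smul hμ]

lemma umbilicVec_const_smul (κ μ : ℝ) (P : Matrix (Fin 3) (Fin 3) ℝ) (a c : Pt → ℝ) :
    umbilicVec P (κ • a) (μ • c) = (μ / κ) • umbilicVec P a c := by
  ext p i
  simp only [umbilicVec, grad_const_smul, mulVec_smul, Pi.smul_apply, smul_eq_mul]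
  ring

lemma umbilicRicci_const_smul {κ μ : ℝ} (hκ : κ ≠ 0) (hμ : μ ≠ 0)
    (P : Matrix (Fin 3) (Fin 3) ℝ) (a c : Pt → ℝ) (p : Pt) :
    umbilicRicci P (κ • a) (μ • c) p = μ / κ * umbilicRicci P a c p := by
  simp only [umbilicRicci, scaleInvConn_const_smul hκ hμ, umbilicVec_const_smul,
    connDiv_const_smul, logGrad_const_smul hμ, Pi.smul_apply, dotProduct_smul, smul_eq_mul]
  ring

theorem ricci_splitMetric_const_smul {κ μ : ℝ} (hκ : κ ≠ 0) (hμ : μ ≠ 0)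
    (hP : IsStarProjection P) (ha : ContDiffAt ℝ 2 a p) (hc : ContDiffAt ℝ 2 c p)
    (ha0 : a p ≠ 0) (hc0 : c p ≠ 0)
    (hh : ∀ᶠ q in 𝓝 p, IsInverseAt (splitMetric P a c) hinv q)
    (hh' : ∀ᶠ q in 𝓝 p, IsInverseAt (splitMetric P (κ • a) (μ • c)) hinv' q) :
    (of fun j k => Ricci (splitMetric P (κ • a) (μ • c)) hinv' j k p)
      = (of fun j k => Ricci (splitMetric P a c) hinv j k p)
        + (((κ / μ - 1) * umbilicRicci (1 - P) c a p) • (1 - P)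
          + ((μ / κ - 1) * umbilicRicci P a c p) • P) := by
  have hscale : κ / μ * (μ / κ) = 1 := by field_simp
  rw [ricci_splitMetric hP ha hc ha0 hc0 hh,
    ricci_splitMetric (a := κ • a) (c := μ • c) hP (ha.const_smul κ) (hc.const_smul μ)
      (mul_ne_zero hκ ha0) (mul_ne_zero hμ hc0) hh',
    scaleInvConn_const_smul hκ hμ, umbilicRicci_const_smul hκ hμ, umbilicRicci_const_smul hμ hκ,
    umbilicVec_const_smul, umbilicVec_const_smul]
  simp only [Pi.smul_apply, vecMulVec_smul, smul_vecMulVec, smul_smul, hscale, one_smul]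
  module

end SplitMetrics

section CirculantMetrics

variable {A B : Pt → ℝ} {p : Pt}

/-- The orthogonal projection onto the diagonal line spanned by `(1, 1, 1)`. -/
noncomputable def diagProj : Matrix (Fin 3) (Fin 3) ℝ := of fun _ _ => 1/3

lemma isStarProjection_diagProj : IsStarProjection diagProj where
  isIdempotentElem := by
    ext i j
    norm_num [diagProj, mul_apply]
  isSelfAdjoint := by
    ext i j
    simp [diagProj]

lemma gm_eq_splitMetric (A B : Pt → ℝ) :
    gm A B = splitMetric diagProj (A - B) (A + (2 : ℝ) • B) := by
  ext i j p
  simp only [gm, splitMetric, diagProj, Matrix.add_apply, Matrix.smul_apply, Matrix.sub_apply,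
    of_apply, one_apply, Pi.add_apply, Pi.sub_apply, Pi.smul_apply, smul_eq_mul]
  split_ifs <;> ring

lemma gt_eq_splitMetric (A B : Pt → ℝ) :
    gt A B = splitMetric diagProj ((-1 : ℝ) • (A - B)) ((2 : ℝ) • (A + (2 : ℝ) • B)) := by
  ext i j p
  have hgt : ∀ i j, gt A B i j p = if i = j then 2 * B p else A p + B p := fun i j => by
    fin_cases i <;> fin_cases j <;> simp [gt, gm, Qmat, Fin.sum_univ_three, two_mul, add_comm]
  simp only [hgt, splitMetric, diagProj, Matrix.add_apply, Matrix.smul_apply, Matrix.sub_apply,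
    of_apply, one_apply, Pi.add_apply, Pi.sub_apply, Pi.smul_apply, smul_eq_mul]
  split_ifs <;> ring

lemma det_gm (A B : Pt → ℝ) (p : Pt) :
    (of fun i j => gm A B i j p).det = (A p - B p) ^ 2 * (A p + 2 * B p) := by
  simp only [gm, det_fin_three, of_apply, ↓reduceIte, Fin.reduceEq]
  ring

lemma eigenvalues_gm_ne_zero {ginv : Fin 3 → Fin 3 → Pt → ℝ} (hg : IsInverseAt (gm A B) ginv p) :
    (A - B) p ≠ 0 ∧ (A + (2 : ℝ) • B) p ≠ 0 := by
  have hdet := det_ne_zero_of_right_inverse hg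
  rw [det_gm] at hdet
  simpa using hdet

lemma sum_splitMetric_mul (a c : Pt → ℝ) (p : Pt) (α β : ℝ) :
    ∑ j, ∑ k, splitMetric diagProj a c j k p * (α • (1 - diagProj) + β • diagProj) j k
      = 2 * (a p * α) + c p * β := by
  simp only [splitMetric, diagProj, Matrix.add_apply, Matrix.smul_apply, Matrix.sub_apply, of_apply,
    one_apply, smul_eq_mul, Fin.sum_univ_three, ↓reduceIte, Fin.reduceEq]
  ring

lemma scal_eq_of_ricci_eq_add {h h' hinv hinv' contr : Fin 3 → Fin 3 → Pt → ℝ} {a c : Pt → ℝ}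
    {α β : ℝ} (hR : (of fun j k => Ricci h' hinv' j k p)
      = (of fun j k => Ricci h hinv j k p) + (α • (1 - diagProj) + β • diagProj))
    (ha0 : a p ≠ 0) (hc0 : c p ≠ 0) (hcontr : IsInverseAt (splitMetric diagProj a c) contr p) :
    scal h' hinv' contr p = scal h hinv contr p + (2 * (α / a p) + β / c p) := by
  have hR' (j k : Fin 3) : Ricci h' hinv' j k p
      = Ricci h hinv j k p + (α • (1 - diagProj) + β • diagProj) j k := congrFun₂ hR j k
  have hcontr' := eq_splitMetric_inv isStarProjection_diagProj.isIdempotentElem ha0 hc0 hcontr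
  simp only [scal, hR', mul_add, Finset.sum_add_distrib]
  simp only [hcontr', sum_splitMetric_mul, Pi.inv_apply, div_eq_inv_mul]

lemma exists_ricci_gt_eq_add {ginv gtinv : Fin 3 → Fin 3 → Pt → ℝ} (hA : ContDiffAt ℝ 2 A p)
    (hB : ContDiffAt ℝ 2 B p) (hg : ∀ᶠ q in 𝓝 p, IsInverseAt (gm A B) ginv q)
    (hgt : ∀ᶠ q in 𝓝 p, IsInverseAt (gt A B) gtinv q) :
    ∃ α β : ℝ, (of fun j k => Ricci (gt A B) gtinv j k p)
      = (of fun j k => Ricci (gm A B) ginv j k p) + (α • (1 - diagProj) + β • diagProj) := by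
  obtain ⟨ha0, hc0⟩ := eigenvalues_gm_ne_zero hg.self_of_nhds
  rw [gt_eq_splitMetric, gm_eq_splitMetric] at *
  exact ⟨_, _, ricci_splitMetric_const_smul (by norm_num) two_ne_zero isStarProjection_diagProj
    (hA.sub hB) (hA.add (hB.const_smul (2 : ℝ))) ha0 hc0 hg hgt⟩

theorem ricci_relation_general
    (U : Set Pt) (hU : IsOpen U) (A B : Pt → ℝ)
    (hA : ContDiffOn ℝ 2 A U) (hB : ContDiffOn ℝ 2 B U)
    (ginv gtinv : Fin 3 → Fin 3 → Pt → ℝ)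
    (hginv : ∀ p ∈ U, ∀ i j, (∑ s, gm A B i s p * ginv s j p) = if i = j then (1 : ℝ) else 0)
    (hgtinv : ∀ p ∈ U, ∀ i j, (∑ s, gt A B i s p * gtinv s j p) = if i = j then (1 : ℝ) else 0) :
    ∀ p ∈ U, ∀ i j,
      Ricci (gt A B) gtinv i j p =
        Ricci (gm A B) ginv i j p
        + (1/3) * (scal (gt A B) gtinv ginv p - scal (gm A B) ginv ginv p) * gm A B i j p
        + (1/6) * (2 * scal (gt A B) gtinv gtinv p - 2 * scal (gm A B) ginv gtinv p
            + scal (gt A B) gtinv ginv p - scal (gm A B) ginv ginv p) * gt A B i j p := by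
  intro p hp i j
  have hg : ∀ q ∈ U, IsInverseAt (gm A B) ginv q := fun q hq => isInverseAt_iff.2 (hginv q hq)
  have hgt : ∀ q ∈ U, IsInverseAt (gt A B) gtinv q := fun q hq => isInverseAt_iff.2 (hgtinv q hq)
  have hUp : U ∈ 𝓝 p := hU.mem_nhds hp
  obtain ⟨ha0, hc0⟩ := eigenvalues_gm_ne_zero (hg p hp)
  obtain ⟨α, β, hR⟩ := exists_ricci_gt_eq_add (hA.contDiffAt hUp) (hB.contDiffAt hUp)
    (mem_of_superset hUp hg) (mem_of_superset hUp hgt)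
  have hτ := scal_eq_of_ricci_eq_add hR ha0 hc0 (gm_eq_splitMetric A B ▸ hg p hp)
  have hτt := scal_eq_of_ricci_eq_add hR (mul_ne_zero (neg_ne_zero.2 one_ne_zero) ha0)
    (mul_ne_zero two_ne_zero hc0) (gt_eq_splitMetric A B ▸ hgt p hp)
  have hRij : Ricci (gt A B) gtinv i j p
      = Ricci (gm A B) ginv i j p + (α * (1 - diagProj) i j + β * diagProj i j) := congrFun₂ hR i j
  have hgij : gm A B i j p = (A - B) p * (1 - diagProj) i j
      + (A + (2 : ℝ) • B) p * diagProj i j := congrFun₃ (gm_eq_splitMetric A B) i j p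
  have hgtij : gt A B i j p = -1 * (A - B) p * (1 - diagProj) i j
      + 2 * (A + (2 : ℝ) • B) p * diagProj i j := congrFun₃ (gt_eq_splitMetric A B) i j p
  rw [hτ, hτt, hRij, hgij, hgtij, Pi.smul_apply, Pi.smul_apply, smul_eq_mul, smul_eq_mul]
  field_simp
  ring

end CirculantMetrics

/-- relation between the Ricci tensors and scalar curvatures of `g` and
`g̃`: `ρ̃_{ij} = ρ_{ij} + (1/3)(τ̃* − τ) g_{ij} + (1/6)(2τ̃ − 2τ* + τ̃* − τ) g̃_{ij}`. -/
theorem ricci_relation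
    (U : Set Pt) (hU : IsOpen U) (A B : Pt → ℝ)
    (hA : ContDiffOn ℝ (⊤ : ℕ∞) A U) (hB : ContDiffOn ℝ (⊤ : ℕ∞) B U)
    (hpos : ∀ p ∈ U, 0 < B p ∧ B p < A p)
    (ginv gtinv : Fin 3 → Fin 3 → Pt → ℝ)
    (hginv : ∀ p ∈ U, ∀ i j, (∑ s, gm A B i s p * ginv s j p) = if i = j then (1:ℝ) else 0)
    (hgtinv : ∀ p ∈ U, ∀ i j, (∑ s, gt A B i s p * gtinv s j p) = if i = j then (1:ℝ) else 0) :
    ∀ p ∈ U, ∀ i j,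
      Ricci (gt A B) gtinv i j p =
        Ricci (gm A B) ginv i j p
        + (1/3) * (scal (gt A B) gtinv ginv p - scal (gm A B) ginv ginv p) * gm A B i j p
        + (1/6) * (2 * scal (gt A B) gtinv gtinv p - 2 * scal (gm A B) ginv gtinv p
            + scal (gt A B) gtinv ginv p - scal (gm A B) ginv ginv p) * gt A B i j p :=
  ricci_relation_general U hU A B (contDiffOn_infty.1 hA 2) (contDiffOn_infty.1 hB 2) ginv gtinv
    hginv hgtinv
end

section
/- With the Lie-algebra setup below, suppose the bracket is given by [x₁,x₂] = λ₁x₁ + λ₂x₂ + λ₃x₃, [x₂,x₃] = ν₁x₁ + ν₂x₂ + ν₃x₃, [x₁,x₃] = μ₁x₁ + μ₂x₂ + μ₃x₃, satisfies the Jacobi identity, and the fundamental tensor satisfies the identity F(xₖ,xᵢ,xⱼ) = (1/3)·(g(xₖ,xⱼ)θᵢ + g(xₖ,xᵢ)θⱼ + g̃(xₖ,xⱼ)θ*ᵢ + g̃(xₖ,xᵢ)θ*ⱼ) for all i, j, k. Then μ₁ = ν₂ + λ₃, μ₂ = ν₃ + λ₁, μ₃ = ν₁ + λ₂, and the structure constants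 satisfy: 2ν₁λ₂ + ν₁² − λ₁ν₂ − ν₂ν₃ − λ₃ν₃ = 0, 2ν₂λ₃ + λ₃² − λ₂ν₃ − λ₁λ₂ − λ₁ν₁ = 0, and −λ₁² + ν₃² + λ₂λ₃ − ν₁ν₂ = 0. -/
open scoped BigOperators

/-- The underlying vector space ℝ³. -/
abbrev V := Fin 3 → ℝ

/-- The standard basis `x₁, x₂, x₃` of ℝ³ (indexed from 0). -/
def e (i : Fin 3) : V := Pi.single i 1

/-- The standard inner product `g` on ℝ³ (the basis `e` is orthonormal). -/
def ip (x y : V) : ℝ := ∑ i, x i * y i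

/-- The circulant structure `Q`: `Q x₁ = x₂`, `Q x₂ = x₃`, `Q x₃ = x₁`. -/
def Qv (x : V) : V := fun j => x (j - 1)

/-- The associated metric `g̃(y,z) = g(y,Qz) + g(Qy,z)`. -/
def gtil (x y : V) : ℝ := ip x (Qv y) + ip (Qv x) y

/-- Bilinearity of a map `V → V → V`. -/
def Bilin (f : V → V → V) : Prop :=
  (∀ (a : ℝ) (x y z : V), f (a • x + y) z = a • f x z + f y z) ∧
  (∀ (a : ℝ) (x y z : V), f x (a • y + z) = a • f x y + f x z)

/-- Skew-symmetry of a map `V → V → V`. -/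
def Skew (f : V → V → V) : Prop := ∀ x y, f x y = - f y x

/-- The Jacobi identity for a bracket. -/
def Jacobi (br : V → V → V) : Prop :=
  ∀ x y z, br x (br y z) + br y (br z x) + br z (br x y) = 0

/-- The Koszul formula determining the Levi-Civita connection `∇` of the
left-invariant metric `g` on the basis:
`2g(∇_{xᵢ}xⱼ, xₖ) = g([xᵢ,xⱼ],xₖ) + g([xₖ,xᵢ],xⱼ) + g([xₖ,xⱼ],xᵢ)`. -/
def Koszul (br nabla : V → V → V) : Prop :=
  ∀ i j k : Fin 3, 2 * ip (nabla (e i) (e j)) (e k) =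
    ip (br (e i) (e j)) (e k) + ip (br (e k) (e i)) (e j) + ip (br (e k) (e j)) (e i)

/-- The curvature operator `R(x,y)z = ∇ₓ∇_y z − ∇_y∇ₓz − ∇_{[x,y]}z`. -/
def Rop (br nabla : V → V → V) (x y z : V) : V :=
  nabla x (nabla y z) - nabla y (nabla x z) - nabla (br x y) z

/-- The curvature tensor of type (0,4): `R(x,y,z,u) = g(R(x,y)z, u)`. -/
def Rten (br nabla : V → V → V) (x y z u : V) : ℝ := ip (Rop br nabla x y z) u

/-- The Ricci tensor `ρ(y,z) = Σᵢ R(xᵢ,y,z,xᵢ)`. -/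
def ricci (br nabla : V → V → V) (y z : V) : ℝ := ∑ i, Rten br nabla (e i) y z (e i)

/-- The scalar curvature `τ = Σᵢ ρ(xᵢ,xᵢ)`. -/
def scalc (br nabla : V → V → V) : ℝ := ∑ i, ricci br nabla (e i) (e i)

/-- The fundamental tensor `F(x,y,z) = −g̃(∇ₓy, z) − g̃(y, ∇ₓz)`
(the covariant derivative of `g̃`, which has constant components in this frame). -/
def Fop (nabla : V → V → V) (x y z : V) : ℝ := -(gtil (nabla x y) z) - gtil y (nabla x z)

/-- The Lee form `θₖ = Σᵢ F(xᵢ,xᵢ,xₖ)`. -/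
def lee (nabla : V → V → V) (k : Fin 3) : ℝ := ∑ i, Fop nabla (e i) (e i) (e k)

/-- The Lee form `θ*ₖ = Σᵢ F(xᵢ,Qxᵢ,xₖ)`. -/
def leeStar (nabla : V → V → V) (k : Fin 3) : ℝ := ∑ i, Fop nabla (e i) (Qv (e i)) (e k)

/-! Since `g̃(y, z) = s(y) s(z) - g(y, z)`, where `s` is the sum of the coordinates,
compatibility of `∇` with `g` gives `F(xₖ, xᵢ, xⱼ) = -(s(∇_{xₖ}xᵢ) + s(∇_{xₖ}xⱼ))`. The
characteristic identity makes `F(xₖ, xᵢ, xᵢ)`, hence `s(∇_{xₖ}xᵢ)`, the same for both `k ≠ i`, and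
by vanishing torsion this is one linear relation between structure constants for each `i`. In
dimension three the Jacobi identity on the frame reads
`tr(ad x₁) [x₂, x₃] + tr(ad x₂) [x₃, x₁] + tr(ad x₃) [x₁, x₂] = 0`,
and its components, after the linear relations are substituted, are the quadratic relations. -/

@[simp]
theorem e_apply (i j : Fin 3) : e i j = if j = i then 1 else 0 :=
  Pi.single_apply i 1 j

theorem ip_e (x : V) (k : Fin 3) : ip x (e k) = x k := by
  simp [ip]

theorem gtil_eq_sum_mul_sum_sub_ip (x y : V) :
    gtil x y = (∑ i, x i) * (∑ i, y i) - ip x y := by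
  have h₀ : (0 : Fin 3) - 1 = 2 := rfl
  have h₂ : (2 : Fin 3) - 1 = 1 := rfl
  simp only [gtil, ip, Qv, Fin.sum_univ_three, h₀, sub_self, h₂]
  ring

theorem gtil_comm (x y : V) : gtil x y = gtil y x := by
  simp only [gtil_eq_sum_mul_sum_sub_ip, ip, mul_comm]

theorem gtil_e (x : V) (k : Fin 3) : gtil x (e k) = ∑ i, x i - x k := by
  simp [gtil_eq_sum_mul_sum_sub_ip, ip_e]

theorem ip_e_e_of_ne {i k : Fin 3} (h : i ≠ k) : ip (e i) (e k) = 0 := by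
  simp [ip_e, h.symm]

theorem gtil_e_e_of_ne {i k : Fin 3} (h : i ≠ k) : gtil (e i) (e k) = 1 := by
  simp [gtil_e, h.symm]

section Bracket

variable {br : V → V → V}

theorem Bilin.apply_eq_sum_right (hbil : Bilin br) (x y : V) :
    br x y = ∑ i, y i • br x (e i) := by
  have map_zero : br x 0 = 0 := by simpa using hbil.2 1 x 0 0
  have map_smul (a : ℝ) (z : V) : br x (a • z) = a • br x z := by
    simpa [map_zero] using hbil.2 a x z 0
  have hy : y = y 0 • e 0 + (y 1 • e 1 + y 2 • e 2) := by
    ext j; fin_cases j <;> simp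
  conv_lhs => rw [hy]
  rw [hbil.2, hbil.2, map_smul, Fin.sum_univ_three, add_assoc]

theorem Skew.apply_self (hskew : Skew br) (x : V) : br x x = 0 :=
  self_eq_neg.mp (hskew x x)

/-- The trace of `ad x = [x, ·]`, computed in the frame `e`; its values on the frame are the
coefficients in the Jacobi identity. -/
def adTrace (br : V → V → V) (x : V) : ℝ := ∑ j, br x (e j) j

theorem Jacobi.sum_adTrace_smul_bracket (hjac : Jacobi br) (hbil : Bilin br) (hskew : Skew br) :
    adTrace br (e 0) • br (e 1) (e 2) + adTrace br (e 1) • br (e 2) (e 0) +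
      adTrace br (e 2) • br (e 0) (e 1) = 0 := by
  have h := hjac (e 0) (e 1) (e 2)
  rw [hbil.apply_eq_sum_right (e 0) (br _ _), hbil.apply_eq_sum_right (e 1) (br _ _),
    hbil.apply_eq_sum_right (e 2) (br _ _)] at h
  simp only [Fin.sum_univ_three, hskew.apply_self, hskew (e 1) (e 0), hskew (e 2) (e 1),
    hskew (e 0) (e 2)] at h
  simp only [adTrace, Fin.sum_univ_three, hskew.apply_self, hskew (e 1) (e 0), hskew (e 2) (e 1),
    hskew (e 0) (e 2), Pi.neg_apply, Pi.zero_apply]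
  linear_combination (norm := module) -h

theorem Jacobi.quadratic_relation (hjac : Jacobi br) (hbil : Bilin br) (hskew : Skew br)
    (k : Fin 3) :
    (br (e 0) (e 1) 1 + br (e 0) (e 2) 2) * br (e 1) (e 2) k -
        (br (e 1) (e 2) 2 - br (e 0) (e 1) 0) * br (e 0) (e 2) k -
      (br (e 0) (e 2) 0 + br (e 1) (e 2) 1) * br (e 0) (e 1) k = 0 := by
  have h := congrFun (hjac.sum_adTrace_smul_bracket hbil hskew) k
  simp only [adTrace, Fin.sum_univ_three, hskew.apply_self, hskew (e 1) (e 0), hskew (e 2) (e 0),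
    hskew (e 2) (e 1), Pi.add_apply, Pi.smul_apply, Pi.neg_apply, Pi.zero_apply,
    smul_eq_mul] at h
  linear_combination h

end Bracket

section LeviCivita

variable {br nabla : V → V → V}

theorem Koszul.two_mul_nabla_apply (hkos : Koszul br nabla) (i j k : Fin 3) :
    2 * nabla (e i) (e j) k =
      br (e i) (e j) k + br (e k) (e i) j + br (e k) (e j) i := by
  simpa only [ip_e] using hkos i j k

theorem Koszul.nabla_apply_swap (hkos : Koszul br nabla) (hskew : Skew br) (i j k : Fin 3) :
    nabla (e i) (e j) k = -nabla (e i) (e k) j := by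
  have hij := hkos.two_mul_nabla_apply i j k
  have hik := hkos.two_mul_nabla_apply i k j
  rw [hskew (e k) (e i), hskew (e k) (e j), Pi.neg_apply, Pi.neg_apply] at hij
  rw [hskew (e j) (e i), Pi.neg_apply] at hik
  linear_combination (hij + hik) / 2

theorem Koszul.nabla_apply_self (hkos : Koszul br nabla) (hskew : Skew br) (i j : Fin 3) :
    nabla (e i) (e j) j = 0 :=
  self_eq_neg.mp (hkos.nabla_apply_swap hskew i j j)

theorem Koszul.nabla_sub_nabla (hkos : Koszul br nabla) (hskew : Skew br) (i j : Fin 3) :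
    nabla (e i) (e j) - nabla (e j) (e i) = br (e i) (e j) := by
  ext k
  have hij := hkos.two_mul_nabla_apply i j k
  have hji := hkos.two_mul_nabla_apply j i k
  rw [hskew (e j) (e i), Pi.neg_apply] at hji
  rw [Pi.sub_apply]
  linear_combination (hij - hji) / 2

theorem Koszul.nabla_apply_left (hkos : Koszul br nabla) (hskew : Skew br) (i j : Fin 3) :
    nabla (e i) (e j) i = br (e i) (e j) i := by
  rw [← hkos.nabla_sub_nabla hskew, Pi.sub_apply, hkos.nabla_apply_self hskew, sub_zero]

theorem Koszul.Fop_e (hkos : Koszul br nabla) (hskew : Skew br) (i j k : Fin 3) :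
    Fop nabla (e k) (e i) (e j) =
      -(∑ m, nabla (e k) (e i) m + ∑ m, nabla (e k) (e j) m) := by
  rw [Fop, gtil_comm (e i), gtil_e, gtil_e, hkos.nabla_apply_swap hskew k i j]
  ring

theorem Koszul.bracket_apply_eq_sub_of_Fop_eq (hkos : Koszul br nabla) (hskew : Skew br)
    {i k l : Fin 3} (hik : i ≠ k) (hil : i ≠ l) (hkl : k ≠ l)
    (hF : Fop nabla (e k) (e i) (e i) = Fop nabla (e l) (e i) (e i)) :
    br (e k) (e l) i = br (e k) (e i) k - br (e l) (e i) l := by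
  have univ_eq : (Finset.univ : Finset (Fin 3)) = {i, k, l} := by
    clear hF
    decide +revert
  have sum_nabla (a : Fin 3) :
      ∑ m, nabla (e a) (e i) m = nabla (e a) (e i) k + nabla (e a) (e i) l := by
    simp [univ_eq, hik, hil, hkl, hkos.nabla_apply_self hskew a i]
  have sum_eq : br (e k) (e i) k - nabla (e k) (e l) i =
      br (e l) (e i) l - nabla (e l) (e k) i := by
    rw [hkos.Fop_e hskew, hkos.Fop_e hskew, sum_nabla, sum_nabla, hkos.nabla_apply_left hskew,
      hkos.nabla_apply_left hskew, hkos.nabla_apply_swap hskew k i l,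
      hkos.nabla_apply_swap hskew l i k] at hF
    linear_combination -hF / 2
  rw [← hkos.nabla_sub_nabla hskew k l, Pi.sub_apply]
  linear_combination -sum_eq

end LeviCivita

/-- if the Lie bracket on `(G, g, Q)` has structure constants
`λᵢ, μᵢ, νᵢ` and the fundamental tensor satisfies the characteristic identity
`F(xₖ,xᵢ,xⱼ) = (1/3)(g(xₖ,xⱼ)θᵢ + g(xₖ,xᵢ)θⱼ + g̃(xₖ,xⱼ)θ*ᵢ + g̃(xₖ,xᵢ)θ*ⱼ)`,
then `μ₁ = ν₂ + λ₃`, `μ₂ = ν₃ + λ₁`, `μ₃ = ν₁ + λ₂`, and the structure constants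
satisfy the three quadratic relations. -/
theorem lie_group_structure_constants
    (br : V → V → V) (hbil : Bilin br) (hskew : Skew br) (hjac : Jacobi br)
    (nabla : V → V → V) (hnbil : Bilin nabla) (hkos : Koszul br nabla)
    (l1 l2 l3 m1 m2 m3 n1 n2 n3 : ℝ)
    (h12 : br (e 0) (e 1) = l1 • e 0 + l2 • e 1 + l3 • e 2)
    (h23 : br (e 1) (e 2) = n1 • e 0 + n2 • e 1 + n3 • e 2)
    (h13 : br (e 0) (e 2) = m1 • e 0 + m2 • e 1 + m3 • e 2)
    (hF : ∀ i j k : Fin 3,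
      Fop nabla (e k) (e i) (e j) =
        (1/3) * (ip (e k) (e j) * lee nabla i + ip (e k) (e i) * lee nabla j
          + gtil (e k) (e j) * leeStar nabla i + gtil (e k) (e i) * leeStar nabla j)) :
    (m1 = n2 + l3 ∧ m2 = n3 + l1 ∧ m3 = n1 + l2) ∧
    (2*n1*l2 + n1^2 - l1*n2 - n2*n3 - l3*n3 = 0 ∧
     2*n2*l3 + l3^2 - l2*n3 - l1*l2 - l1*n1 = 0 ∧
     -l1^2 + n3^2 + l2*l3 - n1*n2 = 0) := by
  have diagonal {i k : Fin 3} (hik : i ≠ k) :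
      Fop nabla (e k) (e i) (e i) = 2 / 3 * leeStar nabla i := by
    rw [hF, ip_e_e_of_ne hik.symm, gtil_e_e_of_ne hik.symm]
    ring
  have linear {i k l : Fin 3} (hik : i ≠ k) (hil : i ≠ l) (hkl : k ≠ l) :
      br (e k) (e l) i = br (e k) (e i) k - br (e l) (e i) l :=
    hkos.bracket_apply_eq_sub_of_Fop_eq hskew hik hil hkl
      ((diagonal hik).trans (diagonal hil).symm)
  have hl3 : l3 = m1 - n2 := by
    simpa [h12, h13, h23] using linear (i := 2) (k := 0) (l := 1)
  have hm2 : m2 = l1 + n3 := by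
    simpa [h12, h13, h23, hskew (e 2) (e 1)] using linear (i := 1) (k := 0) (l := 2)
  have hn1 : n1 = -l2 + m3 := by
    simpa [h12, h13, h23, hskew (e 1) (e 0), hskew (e 2) (e 0)] using
      linear (i := 0) (k := 1) (l := 2)
  obtain ⟨jacobi₁, jacobi₂, jacobi₃⟩ :
      (l2 + m3) * n1 - (n3 - l1) * m1 - (m1 + n2) * l1 = 0 ∧
      (l2 + m3) * n2 - (n3 - l1) * m2 - (m1 + n2) * l2 = 0 ∧
      (l2 + m3) * n3 - (n3 - l1) * m3 - (m1 + n2) * l3 = 0 := by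
    simpa [Fin.forall_fin_succ, h12, h13, h23] using hjac.quadratic_relation hbil hskew
  obtain rfl : m1 = n2 + l3 := by linarith
  obtain rfl : m2 = n3 + l1 := by linarith
  obtain rfl : m3 = n1 + l2 := by linarith
  exact ⟨⟨rfl, rfl, rfl⟩, by linear_combination jacobi₁, by linear_combination -jacobi₃,
    by linear_combination -jacobi₂⟩
end
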